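/- Let (L, ≤) be a finite lattice that is ∨-minimal regular and set n = |J(L)|. Then for every maximal chain C = (c_0, c_1, …, c_n) of L and every i ∈ {1, …, n}, there exists j ∈ J(L) such that η(c_i) = η(c_{i-1}) ∪ {j}; equivalently, |η(c_i)| = i for all i. -/

import Mathlib

open Finset

variable {L : Type*} [Lattice L] [Fintype L] [BoundedOrder L] [DecidableEq L]

noncomputable instance : Fintype {x : L // SupIrred x} := Fintype.ofFinite _

/-- `c = (c 0, …, c m)` is a maximal chain of the lattice `L`:
`⊥ = c 0 ≺ c 1 ≺ ⋯ ≺ c m = ⊤`, where `≺` is the covering relation.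
Its length is `m`. -/
def IsMaxChainLat (m : ℕ) (c : Fin (m + 1) → L) : Prop :=
  c 0 = ⊥ ∧ c (Fin.last m) = ⊤ ∧ ∀ i : Fin m, c i.castSucc ⋖ c i.succ

/-- `η(a) = {x ∈ J(L) : x ≤ a}`, where `J(L)` is the set of `∨`-irreducible
elements of `L`. -/
noncomputable def eta (a : L) : Finset {x : L // SupIrred x} :=
  @Finset.filter _ (fun x => (x : L) ≤ a) (Classical.decPred _) Finset.univ

/-! Every element of a finite lattice is the join of the `∨`-irreducible elements below it, so `η`
is strictly increasing. A strictly increasing chain with `n + 1` members in `L` is thus sent to one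
in the subsets of the `n`-element set `J(L)`, whose cardinalities increase strictly within
`{0, …, n}` and hence are exactly `0, 1, …, n`. -/

theorem le_of_forall_supIrred_le {α : Type*} [SemilatticeSup α] [OrderBot α] [WellFoundedLT α]
    {a b : α} (h : ∀ x, SupIrred x → x ≤ a → x ≤ b) : a ≤ b := by
  obtain ⟨s, rfl, hs⟩ := exists_supIrred_decomposition a
  exact Finset.sup_le fun x hx => h x (hs hx) (le_sup (f := id) hx)

section FinsetChain

variable {α : Type*} [Fintype α] {s : Fin (Fintype.card α + 1) → Finset α}

theorem card_apply_of_strictMono (hs : StrictMono s) (i : Fin (Fintype.card α + 1)) :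
    #(s i) = i := by
  let f (k : Fin (Fintype.card α + 1)) : Fin (Fintype.card α + 1) :=
    ⟨#(s k), Nat.lt_succ_of_le (card_le_univ _)⟩
  have hf : StrictMono f := fun _ _ h => card_strictMono (hs h)
  exact congrArg Fin.val hf.apply_eq

theorem exists_apply_succ_eq_insert_of_strictMono [DecidableEq α] (hs : StrictMono s)
    (i : Fin (Fintype.card α)) : ∃ a, s i.succ = insert a (s i.castSucc) := by
  have hsub : s i.castSucc ⊆ s i.succ := hs.monotone i.castSucc_lt_succ.le
  have hcard : #(s i.castSucc) + 1 = #(s i.succ) := by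
    simp only [card_apply_of_strictMono hs, Fin.val_castSucc, Fin.val_succ]
  obtain ⟨a, -, ha⟩ := exists_eq_insert_iff.2 ⟨hsub, hcard⟩
  exact ⟨a, ha.symm⟩

end FinsetChain

section Eta

variable {M : Type*} [Lattice M] [Fintype M]

theorem mem_eta {a : M} {x : {x : M // SupIrred x}} : x ∈ eta a ↔ (x : M) ≤ a := by
  simp only [eta, mem_filter, mem_univ, true_and]

theorem eta_subset_eta {a b : M} : eta a ⊆ eta b ↔ a ≤ b := by
  have : Nonempty M := ⟨a⟩
  let _ : OrderBot M := Fintype.toOrderBot M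
  refine ⟨fun h => le_of_forall_supIrred_le fun x hx hxa => ?_, fun h x hx => ?_⟩
  · exact mem_eta.1 (@h ⟨x, hx⟩ (mem_eta.2 hxa))
  · exact mem_eta.2 ((mem_eta.1 hx).trans h)

theorem eta_strictMono : StrictMono (eta : M → Finset {x : M // SupIrred x}) :=
  strictMono_of_le_iff_le fun _ _ => eta_subset_eta.symm

theorem eta_succ_eq_insert_of_supMinimalRegular_general [DecidableEq M]
    {c : Fin (Fintype.card {x : M // SupIrred x} + 1) → M} (hc : StrictMono c) :
    (∀ i : Fin (Fintype.card {x : M // SupIrred x}),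
        ∃ j : {x : M // SupIrred x}, eta (c i.succ) = insert j (eta (c i.castSucc))) ∧
      ∀ i : Fin (Fintype.card {x : M // SupIrred x} + 1), #(eta (c i)) = (i : ℕ) :=
  have hη : StrictMono (eta ∘ c) := eta_strictMono.comp hc
  ⟨exists_apply_succ_eq_insert_of_strictMono hη, card_apply_of_strictMono hη⟩

end Eta

theorem IsMaxChainLat.strictMono {M : Type*} [Lattice M] [BoundedOrder M] {m : ℕ}
    {c : Fin (m + 1) → M} (hc : IsMaxChainLat m c) : StrictMono c :=
  Fin.strictMono_iff_lt_succ.2 fun i => (hc.2.2 i).lt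

/-- if the finite lattice `L` is `∨`-minimal regular with
`n = |J(L)|`, then along every maximal chain `c` of `L`, each step adds exactly one
`∨`-irreducible element to `η`: `η(c i) = η(c (i-1)) ∪ {j}` for some `j ∈ J(L)`;
equivalently `|η(c i)| = i` for all `i`. -/
theorem eta_succ_eq_insert_of_supMinimalRegular
    (hreg : ∀ (m : ℕ) (c : Fin (m + 1) → L), IsMaxChainLat m c →
      m = Fintype.card {x : L // SupIrred x})
    (c : Fin (Fintype.card {x : L // SupIrred x} + 1) → L)
    (hc : IsMaxChainLat (Fintype.card {x : L // SupIrred x}) c) :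
    (∀ i : Fin (Fintype.card {x : L // SupIrred x}),
        ∃ j : {x : L // SupIrred x}, eta (c i.succ) = insert j (eta (c i.castSucc))) ∧
      ∀ i : Fin (Fintype.card {x : L // SupIrred x} + 1), (eta (c i)).card = (i : ℕ) := by
  exact eta_succ_eq_insert_of_supMinimalRegular_general hc.strictMono
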